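/- Let c be a real constant, t_d a real constant, and let r, V_r, V_θ, ϑ, a_I : ℝ → ℝ satisfy at time t: r'(t) = V_r(t), V_r'(t) = ϑ'(t)·V_θ(t), V_θ'(t) = −ϑ'(t)·V_r(t) − a_I(t), and r(t)·ϑ'(t) = V_θ(t), with D(t) := V_θ(t)² + V_r(t)² + 2c·V_r(t) ≠ 0 in a neighborhood of t. Define the impact-time error e(t) := t_go(t) − (t_d − t), where t_go := −r·(V_r + 2c)/D. Then e is differentiable at t with e'(t) = F(t) + B(t)·a_I(t), where F := 2c·(V_r + 2c)·V_θ²/D² and B := −2·(V_r + 2c)·V_θ·r/D². -/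

import Mathlib

/-!
The numerator of `t_go = -r (V_r + 2c) / D` has derivative `-D` whatever the interceptor does, and
`D' = 2 V_θ (c ϑ' - a_I)`. By the quotient rule `t_go' = -1 + B (a_I - c ϑ')`: the time-to-go
decreases at unit rate exactly along the guidance law `a_I = c ϑ'`, and `B` measures the effect of
deviating from it. Finally `-B c ϑ' = F` because `r ϑ' = V_θ`.
-/

section TrueProportionalNavigation

variable {𝕜 : Type*}

section Algebra

variable [Field 𝕜]

/-- The denominator `D = V_θ² + V_r² + 2c·V_r` of the TPNG time-to-go, as a function of the radial
velocity `u` and the tangential velocity `v`. -/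
def tpngDenominator (c u v : 𝕜) : 𝕜 :=
  v ^ 2 + u ^ 2 + 2 * c * u

/-- The TPNG time-to-go `t_go` at range `ρ`, radial velocity `u` and tangential velocity `v`. It
takes the junk value `0` where `tpngDenominator c u v = 0`. -/
def tpngTimeToGo (c ρ u v : 𝕜) : 𝕜 :=
  -(ρ * (u + 2 * c)) / tpngDenominator c u v

/-- The drift `F` of the impact-time error: its rate of change under zero lateral acceleration. -/
def impactTimeErrorDrift (c u v : 𝕜) : 𝕜 :=
  2 * c * (u + 2 * c) * v ^ 2 / tpngDenominator c u v ^ 2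

/-- The control gain `B`: the coefficient of the lateral acceleration in the rate of change of the
impact-time error. -/
def impactTimeErrorGain (c ρ u v : 𝕜) : 𝕜 :=
  -(2 * (u + 2 * c) * v * ρ) / tpngDenominator c u v ^ 2

theorem impactTimeErrorDrift_eq_neg_gain_mul {c ρ u v ω : 𝕜} (hrel : ρ * ω = v) :
    impactTimeErrorDrift c u v = -(impactTimeErrorGain c ρ u v * (c * ω)) := by
  subst hrel
  unfold impactTimeErrorDrift impactTimeErrorGain
  ring

end Algebra

variable [NontriviallyNormedField 𝕜] {c t ω a : 𝕜} {r Vr Vθ : 𝕜 → 𝕜}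

theorem hasDerivAt_range_mul_radialVelocity_add_two_mul (hr : HasDerivAt r (Vr t) t)
    (hVr : HasDerivAt Vr (ω * Vθ t) t) (hrel : r t * ω = Vθ t) :
    HasDerivAt (fun s => r s * (Vr s + 2 * c)) (tpngDenominator c (Vr t) (Vθ t)) t := by
  refine (hr.fun_mul (hVr.add_const (2 * c))).congr_deriv ?_
  unfold tpngDenominator
  linear_combination Vθ t * hrel

theorem hasDerivAt_tpngDenominator (hVr : HasDerivAt Vr (ω * Vθ t) t)
    (hVθ : HasDerivAt Vθ (-ω * Vr t - a) t) :
    HasDerivAt (fun s => tpngDenominator c (Vr s) (Vθ s)) (2 * Vθ t * (c * ω - a)) t := by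
  refine (((hVθ.fun_pow 2).fun_add (hVr.fun_pow 2)).fun_add
    (hVr.const_mul (2 * c))).congr_deriv ?_
  push_cast
  ring

theorem hasDerivAt_tpngTimeToGo (hr : HasDerivAt r (Vr t) t)
    (hVr : HasDerivAt Vr (ω * Vθ t) t) (hVθ : HasDerivAt Vθ (-ω * Vr t - a) t)
    (hrel : r t * ω = Vθ t) (hD : tpngDenominator c (Vr t) (Vθ t) ≠ 0) :
    HasDerivAt (fun s => tpngTimeToGo c (r s) (Vr s) (Vθ s))
      (-1 + impactTimeErrorGain c (r t) (Vr t) (Vθ t) * (a - c * ω)) t := by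
  have hnum := (hasDerivAt_range_mul_radialVelocity_add_two_mul (c := c) hr hVr hrel).fun_neg
  refine (hnum.fun_div (hasDerivAt_tpngDenominator hVr hVθ) hD).congr_deriv ?_
  unfold impactTimeErrorGain
  field_simp
  ring

theorem impact_time_error_dynamics_general (c t_d : 𝕜) (r Vr Vθ ϑ aI : 𝕜 → 𝕜) (t ω : 𝕜)
    (_hθ : HasDerivAt ϑ ω t)
    (hr : HasDerivAt r (Vr t) t)
    (hVr : HasDerivAt Vr (ω * Vθ t) t)
    (hVθ : HasDerivAt Vθ (-ω * Vr t - aI t) t)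
    (hrel : r t * ω = Vθ t)
    (hD : tpngDenominator c (Vr t) (Vθ t) ≠ 0) :
    HasDerivAt (fun s => tpngTimeToGo c (r s) (Vr s) (Vθ s) - (t_d - s))
      (impactTimeErrorDrift c (Vr t) (Vθ t) +
        impactTimeErrorGain c (r t) (Vr t) (Vθ t) * aI t) t := by
  have hgo := hasDerivAt_tpngTimeToGo hr hVr hVθ hrel hD
  have hdesired : HasDerivAt (fun s => t_d - s) (-1) t := (hasDerivAt_id' t).const_sub t_d
  refine (hgo.fun_sub hdesired).congr_deriv ?_
  rw [impactTimeErrorDrift_eq_neg_gain_mul hrel]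
  ring

end TrueProportionalNavigation

/-- Dynamics of the impact-time error `e = t_go − (t_d − t)`:
`ė = F + B·a_I` with `F = 2c·(V_r+2c)·V_θ²/D²` and `B = −2·(V_r+2c)·V_θ·r/D²`,
where `D = V_θ² + V_r² + 2c·V_r`. -/
theorem impact_time_error_dynamics
    (c t_d : ℝ) (r Vr Vθ ϑ aI : ℝ → ℝ) (t ω : ℝ)
    (hθ : HasDerivAt ϑ ω t)
    (hr : HasDerivAt r (Vr t) t)
    (hVr : HasDerivAt Vr (ω * Vθ t) t)
    (hVθ : HasDerivAt Vθ (-ω * Vr t - aI t) t)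
    (hrel : r t * ω = Vθ t)
    (hD : ∀ᶠ s in nhds t, Vθ s ^ 2 + Vr s ^ 2 + 2 * c * Vr s ≠ 0) :
    HasDerivAt
      (fun s =>
        -(r s * (Vr s + 2 * c)) / (Vθ s ^ 2 + Vr s ^ 2 + 2 * c * Vr s) - (t_d - s))
      (2 * c * (Vr t + 2 * c) * Vθ t ^ 2 /
          (Vθ t ^ 2 + Vr t ^ 2 + 2 * c * Vr t) ^ 2
        + (-(2 * (Vr t + 2 * c) * Vθ t * r t) /
            (Vθ t ^ 2 + Vr t ^ 2 + 2 * c * Vr t) ^ 2) * aI t) t :=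
  impact_time_error_dynamics_general c t_d r Vr Vθ ϑ aI t ω hθ hr hVr hVθ hrel hD.self_of_nhds
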